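/- Let G be a finite abelian group and H a subgroup of G. Then SD(G) ≥ SD(G/H) + Ol(H) − 2, and consequently SD(G) ≥ SD(G/H) + SD(H) − 2. -/

import Mathlib

open Multiset

/-- A sequence (finite multiset) over `G` is zero-sumfree if every nonempty
subsequence has nonzero sum. -/
def IsZeroSumfree {G : Type*} [AddCommMonoid G] (S : Multiset G) : Prop :=
  ∀ T ≤ S, T ≠ 0 → T.sum ≠ 0

/-- A minimal zero-sum sequence: a nonempty sequence with sum zero all of whose
nonempty proper subsequences have nonzero sum. -/
def IsMinimalZeroSum {G : Type*} [AddCommMonoid G] (S : Multiset G) : Prop :=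
  S ≠ 0 ∧ S.sum = 0 ∧ ∀ T ≤ S, T ≠ 0 → T ≠ S → T.sum ≠ 0

/-- The cumulated multiplicity of level `ℓ` of a sequence:
`cm_ℓ(S) = Σ_{g ∈ G} max {0, v_g(S) − ℓ}`. -/
noncomputable def cmul {G : Type*} [AddCommMonoid G] (ℓ : ℕ) (S : Multiset G) : ℕ :=
  letI := Classical.decEq G
  ∑ g ∈ S.toFinset, (S.count g - ℓ)

/-- `SD_{(k,ℓ)}(G)`: the maximum length of a minimal zero-sum sequence `S` over `G`
with `cm_ℓ(S) ≤ k`. -/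
noncomputable def SDpair (G : Type*) [AddCommMonoid G] (k ℓ : ℕ) : ℕ :=
  sSup {m | ∃ S : Multiset G, IsMinimalZeroSum S ∧ cmul ℓ S ≤ k ∧ Multiset.card S = m}

/-- `SD_k(G)`: the `k`-th Strong Davenport constant. -/
noncomputable def SDk (G : Type*) [AddCommMonoid G] (k : ℕ) : ℕ := SDpair G k 1

/-- The Strong Davenport constant `SD(G) = SD_0(G)`. -/
noncomputable def SD (G : Type*) [AddCommMonoid G] : ℕ := SDk G 0

/-- The Olson constant `Ol(G) = SD_1(G)`. -/
noncomputable def Ol (G : Type*) [AddCommMonoid G] : ℕ := SDk G 1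

/-- `ol_k(G)`: the maximum length of a zero-sumfree sequence `S` over `G` with
`cm(S) ≤ k`. -/
noncomputable def olk (G : Type*) [AddCommMonoid G] (k : ℕ) : ℕ :=
  sSup {m | ∃ S : Multiset G, IsZeroSumfree S ∧ cmul 1 S ≤ k ∧ Multiset.card S = m}

/-- `Ol_k(G)`: the smallest integer `ℓ` such that every sequence `S` over `G` with
`cm(S) ≤ k` and `|S| ≥ ℓ` has a nonempty zero-sum subsequence. -/
noncomputable def Olk (G : Type*) [AddCommMonoid G] (k : ℕ) : ℕ :=
  sInf {m | ∀ S : Multiset G, cmul 1 S ≤ k → m ≤ Multiset.card S →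
    ∃ T, T ≤ S ∧ T ≠ 0 ∧ T.sum = 0}

/-- The Davenport constant `D(G)`: the maximum length of a minimal zero-sum
sequence over `G`. -/
noncomputable def DavenportD (G : Type*) [AddCommMonoid G] : ℕ :=
  sSup {m | ∃ S : Multiset G, IsMinimalZeroSum S ∧ Multiset.card S = m}

/-!
Lift a minimal zero-sum set `S` over `G ⧸ H` to a set `W` in `G`, choosing the lift of one term so
that `σ(W)` is a prescribed element `h` of `H`. If `h ::ₘ U` is a minimal zero-sum sequence over
`H`, then `W + U` is one over `G`: the part in `W` of a zero-sum subsequence is zero-sum modulo `H`,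
hence empty or all of `W`, and in the latter case it acts like the single term `h`. Taking `h` to be
the repeated term, if there is one, of a sequence of length `Ol H` makes `W + U` squarefree as long
as `0 ∉ S`. In the remaining case `S = {0}`, one instead adds the repeated term `h` onto another
term `x` such that `x + h` does not occur yet.
-/

section Multiset

variable {α β : Type*}

theorem exists_le_map_eq_of_le_map {f : α → β} {S : Multiset α} {T : Multiset β}
    (hT : T ≤ S.map f) : ∃ R ≤ S, R.map f = T := by
  induction S, T using Quotient.inductionOn₂ with
  | _ s t =>
    obtain ⟨t', hperm, hsub⟩ := hT
    obtain ⟨r, hr, rfl⟩ := List.sublist_map_iff.mp hsub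
    exact ⟨r, hr.subperm, Quot.sound hperm⟩

theorem exists_le_le_eq_add_of_le_add {S T V : Multiset α} (hV : V ≤ S + T) :
    ∃ A ≤ S, ∃ B ≤ T, V = A + B := by
  classical
  refine ⟨V ∩ S, inter_le_right, V - S, tsub_le_iff_left.mpr hV, ?_⟩
  ext x
  simp only [count_add, count_inter, count_sub]
  omega

theorem exists_map_eq_and_sum_eq [AddCommGroup α] [AddCommGroup β] {f : α →+ β}
    (hf : Function.Surjective f) {S : Multiset β} (hS : S ≠ 0) {a : α} (ha : f a = S.sum) :
    ∃ W : Multiset α, W.map f = S ∧ W.sum = a := by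
  obtain ⟨b, hb⟩ := exists_mem_of_ne_zero hS
  obtain ⟨R, rfl⟩ := exists_cons_of_mem hb
  obtain ⟨W, rfl⟩ := map_surjective_of_surjective hf R
  refine ⟨(a - W.sum) ::ₘ W, ?_, by simp⟩
  rw [map_cons, map_sub, ha, sum_cons, map_multiset_sum, add_sub_cancel_right]

theorem exists_mem_add_notMem [AddGroup α] {U : Multiset α} {a : α} (ha : a ∈ U)
    (h0 : (0 : α) ∉ U) : ∃ x ∈ U, x + a ∉ U := by
  classical
  -- Otherwise translation by `a` permutes `U`, and the preimage of `a` is `0`.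
  by_contra! hclosed
  have hsurj : Set.SurjOn (· + a) (U.toFinset : Set α) U.toFinset :=
    Finset.surjOn_of_injOn_of_card_le _ (by simpa [Set.MapsTo] using hclosed)
      (add_left_injective a).injOn le_rfl
  obtain ⟨x, hx, hxa⟩ := hsurj (mem_toFinset.mpr ha)
  obtain rfl : x = 0 := add_eq_right.mp hxa
  exact h0 (mem_toFinset.mp hx)

end Multiset

section CumulatedMultiplicity

variable {G : Type*} [AddCommMonoid G]

theorem cmul_one_add_card_toFinset [DecidableEq G] (S : Multiset G) :
    cmul 1 S + S.toFinset.card = card S := by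
  have hcmul : cmul 1 S = ∑ g ∈ S.toFinset, (S.count g - 1) := by
    unfold cmul
    congr!
  rw [hcmul, ← toFinset_sum_count_eq S, Finset.card_eq_sum_ones, ← Finset.sum_add_distrib]
  refine Finset.sum_congr rfl fun g hg => Nat.sub_add_cancel ?_
  exact one_le_count_iff_mem.mpr (mem_toFinset.mp hg)

theorem cmul_one_eq_zero_iff_nodup {S : Multiset G} : cmul 1 S = 0 ↔ S.Nodup := by
  classical
  rw [← toFinset_card_eq_card_iff_nodup, ← cmul_one_add_card_toFinset S, right_eq_add]

theorem exists_eq_cons_nodup_of_cmul_one_le_one {S : Multiset G} (hS : S ≠ 0)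
    (hcm : cmul 1 S ≤ 1) : ∃ h U, S = h ::ₘ U ∧ U.Nodup := by
  classical
  have hadd : S - S.dedup + S.dedup = S := tsub_add_cancel_of_le (dedup_le S)
  have hcard : card (S - S.dedup) = cmul 1 S := by
    have hsum := cmul_one_add_card_toFinset S
    rw [card_toFinset] at hsum
    rw [card_sub (dedup_le S)]
    omega
  rcases Nat.le_one_iff_eq_zero_or_eq_one.mp hcm with hzero | hone
  · obtain ⟨h, hh⟩ := exists_mem_of_ne_zero hS
    obtain ⟨U, rfl⟩ := exists_cons_of_mem hh
    exact ⟨h, U, rfl, (nodup_cons.mp (cmul_one_eq_zero_iff_nodup.mp hzero)).2⟩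
  · obtain ⟨h, hh⟩ := card_eq_one.mp (hcard.trans hone)
    exact ⟨h, S.dedup, by rw [← singleton_add, ← hh, hadd], nodup_dedup S⟩

end CumulatedMultiplicity

namespace IsMinimalZeroSum

section AddCommMonoid

variable {G K : Type*} [AddCommMonoid G] [AddCommMonoid K] {S T : Multiset G}

theorem eq_zero_or_eq (hS : IsMinimalZeroSum S) (hT : T ≤ S) (hsum : T.sum = 0) :
    T = 0 ∨ T = S := by
  by_contra! hne
  exact hS.2.2 T hT hne.1 hne.2 hsum

theorem eq_zero_of_lt (hS : IsMinimalZeroSum S) (hT : T < S) (hsum : T.sum = 0) : T = 0 :=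
  (hS.eq_zero_or_eq hT.le hsum).resolve_right hT.ne

theorem of_forall_eq_zero_or_eq (hne : S ≠ 0) (hsum : S.sum = 0)
    (h : ∀ T ≤ S, T.sum = 0 → T = 0 ∨ T = S) : IsMinimalZeroSum S :=
  ⟨hne, hsum, fun T hT hT0 hTS hTsum => (h T hT hTsum).elim hT0 hTS⟩

variable (G) in
theorem singleton_zero : IsMinimalZeroSum ({0} : Multiset G) :=
  of_forall_eq_zero_or_eq (singleton_ne_zero 0) (sum_singleton 0) fun _ hT _ => le_singleton.mp hT

theorem eq_singleton_zero (hS : IsMinimalZeroSum S) (h0 : (0 : G) ∈ S) : S = {0} :=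
  ((hS.eq_zero_or_eq (singleton_le.mpr h0) (sum_singleton 0)).resolve_left
    (singleton_ne_zero 0)).symm

theorem map_of_injective (hS : IsMinimalZeroSum S) {f : G →+ K} (hf : Function.Injective f) :
    IsMinimalZeroSum (S.map f) := by
  refine of_forall_eq_zero_or_eq (by simpa using hS.1) ?_ fun V hV hsum => ?_
  · rw [← map_multiset_sum, hS.2.1, _root_.map_zero]
  · obtain ⟨T, hT, rfl⟩ := exists_le_map_eq_of_le_map hV
    rw [← map_multiset_sum, map_eq_zero_iff f hf] at hsum
    rcases hS.eq_zero_or_eq hT hsum with rfl | rfl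
    · exact .inl (Multiset.map_zero f)
    · exact .inr rfl

theorem sum_cons_of_add {W R : Multiset G} (hS : IsMinimalZeroSum (W + R)) (hW : W ≠ 0) :
    IsMinimalZeroSum (W.sum ::ₘ R) := by
  refine of_forall_eq_zero_or_eq cons_ne_zero ?_ fun V hV hsum => ?_
  · rw [sum_cons, ← sum_add, hS.2.1]
  by_cases hmem : W.sum ∈ V
  · obtain ⟨V, rfl⟩ := exists_cons_of_mem hmem
    rw [sum_cons, ← sum_add] at hsum
    have hVR : W + V ≤ W + R := add_le_add_right ((cons_le_cons_iff _).mp hV) W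
    rcases hS.eq_zero_or_eq hVR hsum with hzero | hall
    · exact absurd (add_eq_zero.mp hzero).1 hW
    · exact .inr (by rw [add_left_cancel hall])
  · have hVR : V ≤ R := (le_cons_of_notMem hmem).mp hV
    exact .inl (hS.eq_zero_of_lt (hVR.trans_lt (lt_add_of_pos_left R hW.bot_lt)) hsum)

theorem add_of_map_of_sum_cons {f : G →+ K} {W U : Multiset G} (hW : IsMinimalZeroSum (W.map f))
    (hU : IsMinimalZeroSum (W.sum ::ₘ U)) (hUker : ∀ x ∈ U, f x = 0) :
    IsMinimalZeroSum (W + U) := by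
  have hW0 : W ≠ 0 := by simpa using hW.1
  refine of_forall_eq_zero_or_eq (fun h => hW0 (add_eq_zero.mp h).1) ?_ fun V hV hsum => ?_
  · rw [sum_add, ← sum_cons, hU.2.1]
  obtain ⟨A, hA, B, hB, rfl⟩ := exists_le_le_eq_add_of_le_add hV
  rw [sum_add] at hsum
  have hfB : f B.sum = 0 := by
    rw [map_multiset_sum]
    exact sum_eq_zero fun y hy => by
      obtain ⟨x, hx, rfl⟩ := mem_map.mp hy
      exact hUker x (mem_of_le hB hx)
  have hfA : (A.map f).sum = 0 := calc
    (A.map f).sum = f A.sum + f B.sum := by rw [hfB, add_zero, map_multiset_sum]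
    _ = 0 := by rw [← _root_.map_add, hsum, _root_.map_zero]
  rcases hW.eq_zero_or_eq (map_le_map hA) hfA with hzero | hall
  · obtain rfl : A = 0 := map_eq_zero.mp hzero
    rw [sum_zero, zero_add] at hsum
    rw [hU.eq_zero_of_lt (hB.trans_lt (lt_cons_self _ _)) hsum]
    exact .inl rfl
  · obtain rfl : A = W := eq_of_le_of_card_le hA (by simpa using (congrArg card hall).ge)
    rw [← sum_cons] at hsum
    have hBU := (hU.eq_zero_or_eq (cons_le_cons _ hB) hsum).resolve_left cons_ne_zero
    exact .inr (by rw [(cons_inj_right _).mp hBU])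

end AddCommMonoid

section AddCommGroup

variable {G K : Type*} [AddCommGroup G] [AddCommGroup K] {U : Multiset G} {h : G}

theorem exists_nodup_card_le (hS : IsMinimalZeroSum (h ::ₘ U)) (hU : U.Nodup) :
    ∃ V : Multiset G, IsMinimalZeroSum V ∧ V.Nodup ∧ card U ≤ card V := by
  by_cases hmem : h ∈ U
  · have h0 : (0 : G) ∉ U := fun h0 => by
      have hcard := congrArg card (hS.eq_singleton_zero (mem_cons_of_mem h0))
      rw [card_cons, card_singleton, Nat.add_eq_right, card_eq_zero] at hcard
      exact notMem_zero 0 (hcard ▸ h0)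
    obtain ⟨x, hx, hxh⟩ := exists_mem_add_notMem hmem h0
    obtain ⟨R, rfl⟩ := exists_cons_of_mem hx
    have hmerge : IsMinimalZeroSum ((x + h) ::ₘ R) := by
      have hpair : IsMinimalZeroSum (({x, h} : Multiset G) + R) := by
        simpa [cons_swap x h] using hS
      simpa using hpair.sum_cons_of_add cons_ne_zero
    refine ⟨(x + h) ::ₘ R, hmerge, nodup_cons.mpr ⟨?_, (nodup_cons.mp hU).2⟩, by simp⟩
    exact fun hR => hxh (mem_cons_of_mem hR)
  · exact ⟨h ::ₘ U, hS, nodup_cons.mpr ⟨hmem, hU⟩, card_le_card (le_cons_self U h)⟩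

theorem exists_nodup_card_add_card_le {f : G →+ K} (hf : Function.Surjective f) {S : Multiset K}
    (hS : IsMinimalZeroSum S) (hSnd : S.Nodup) (hU : IsMinimalZeroSum (h ::ₘ U)) (hUnd : U.Nodup)
    (hker : ∀ x ∈ h ::ₘ U, f x = 0) :
    ∃ V : Multiset G, IsMinimalZeroSum V ∧ V.Nodup ∧ card S + card U ≤ card V + 1 := by
  by_cases h0 : (0 : K) ∈ S
  · obtain rfl := hS.eq_singleton_zero h0
    obtain ⟨V, hV, hVnd, hcard⟩ := hU.exists_nodup_card_le hUnd
    exact ⟨V, hV, hVnd, by rw [card_singleton]; omega⟩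
  · obtain ⟨hfh, hfU⟩ := forall_mem_cons.mp hker
    obtain ⟨W, rfl, rfl⟩ := exists_map_eq_and_sum_eq hf hS.1 (hfh.trans hS.2.1.symm)
    have hdisj : Disjoint W U := disjoint_left.mpr fun hxW hxU =>
      h0 (hfU _ hxU ▸ mem_map_of_mem f hxW)
    exact ⟨W + U, hS.add_of_map_of_sum_cons hU hfU, nodup_add.mpr ⟨hSnd.of_map f, hUnd, hdisj⟩,
      by simp⟩

end AddCommGroup

end IsMinimalZeroSum

section StrongDavenport

variable (G : Type*) [AddCommMonoid G] [Finite G]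

theorem bddAbove_card_isMinimalZeroSum (k : ℕ) :
    BddAbove {m | ∃ S : Multiset G, IsMinimalZeroSum S ∧ cmul 1 S ≤ k ∧ card S = m} := by
  classical
  have := Fintype.ofFinite G
  refine ⟨k + Fintype.card G, ?_⟩
  rintro _ ⟨S, -, hcm, rfl⟩
  rw [← cmul_one_add_card_toFinset S]
  exact add_le_add hcm (Finset.card_le_univ _)

variable {G} in
theorem IsMinimalZeroSum.card_le_SDk {S : Multiset G} {k : ℕ} (hS : IsMinimalZeroSum S)
    (hcm : cmul 1 S ≤ k) : card S ≤ SDk G k :=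
  le_csSup (bddAbove_card_isMinimalZeroSum G k) ⟨S, hS, hcm, rfl⟩

variable {G} in
theorem IsMinimalZeroSum.card_le_SD {S : Multiset G} (hS : IsMinimalZeroSum S) (hnd : S.Nodup) :
    card S ≤ SD G :=
  hS.card_le_SDk (cmul_one_eq_zero_iff_nodup.mpr hnd).le

theorem exists_card_eq_SDk (k : ℕ) :
    ∃ S : Multiset G, IsMinimalZeroSum S ∧ cmul 1 S ≤ k ∧ card S = SDk G k := by
  have hcm : cmul 1 ({0} : Multiset G) ≤ k :=
    (cmul_one_eq_zero_iff_nodup.mpr (nodup_singleton 0)).trans_le k.zero_le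
  have hne : {m | ∃ S : Multiset G, IsMinimalZeroSum S ∧ cmul 1 S ≤ k ∧ card S = m}.Nonempty :=
    ⟨1, {0}, .singleton_zero G, hcm, card_singleton 0⟩
  exact Nat.sSup_mem hne (bddAbove_card_isMinimalZeroSum G k)

theorem exists_nodup_card_eq_SD :
    ∃ S : Multiset G, IsMinimalZeroSum S ∧ S.Nodup ∧ card S = SD G := by
  obtain ⟨S, hS, hcm, hcard⟩ := exists_card_eq_SDk G 0
  exact ⟨S, hS, cmul_one_eq_zero_iff_nodup.mp (Nat.le_zero.mp hcm), hcard⟩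

theorem exists_cons_nodup_card_eq_Ol :
    ∃ (h : G) (U : Multiset G), IsMinimalZeroSum (h ::ₘ U) ∧ U.Nodup ∧ card U + 1 = Ol G := by
  obtain ⟨S, hS, hcm, hcard⟩ := exists_card_eq_SDk G 1
  obtain ⟨h, U, rfl, hU⟩ := exists_eq_cons_nodup_of_cmul_one_le_one hS.1 hcm
  exact ⟨h, U, hS, hU, (card_cons h U).symm.trans hcard⟩

theorem SDk_mono : Monotone (SDk G) := by
  intro k l hkl
  obtain ⟨S, hS, hcm, hcard⟩ := exists_card_eq_SDk G k
  exact hcard ▸ hS.card_le_SDk (hcm.trans hkl)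

end StrongDavenport

/-- For a finite abelian group `G` and a subgroup `H`:
`SD(G) ≥ SD(G/H) + Ol(H) − 2`, and consequently `SD(G) ≥ SD(G/H) + SD(H) − 2`. -/
theorem strong_davenport_ge_quotient_add_subgroup (G : Type*) [AddCommGroup G] [Fintype G]
    (H : AddSubgroup G) :
    SD (G ⧸ H) + Ol H ≤ SD G + 2 ∧ SD (G ⧸ H) + SD H ≤ SD G + 2 := by
  have hOl : SD (G ⧸ H) + Ol H ≤ SD G + 2 := by
    obtain ⟨S, hS, hSnd, hScard⟩ := exists_nodup_card_eq_SD (G ⧸ H)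
    obtain ⟨h, U, hU, hUnd, hUcard⟩ := exists_cons_nodup_card_eq_Ol H
    have hU' := hU.map_of_injective H.subtype_injective
    rw [map_cons] at hU'
    have hker : ∀ x ∈ H.subtype h ::ₘ U.map H.subtype, QuotientAddGroup.mk' H x = 0 := by
      rw [← map_cons]
      rintro _ hx
      obtain ⟨y, -, rfl⟩ := mem_map.mp hx
      exact (QuotientAddGroup.eq_zero_iff _).mpr y.2
    obtain ⟨V, hV, hVnd, hVcard⟩ := hS.exists_nodup_card_add_card_le
      (QuotientAddGroup.mk'_surjective H) hSnd hU' (hUnd.map H.subtype_injective) hker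
    have hVSD := hV.card_le_SD hVnd
    rw [card_map] at hVcard
    omega
  have hSD_le_Ol : SD H ≤ Ol H := SDk_mono H zero_le_one
  exact ⟨hOl, by omega⟩
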